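/- Let τ_1, …, τ_s be real polynomials in (w, x) ∈ ℝ^k × ℝ^N, each of degree at most d in the components of w, and let φ(w, x) be a fixed Boolean combination of the s atomic predicates τ_j(w, x) = 0 or τ_j(w, x) > 0. For each w ∈ ℝ^k let A_w = {x ∈ ℝ^N : φ(w, x) holds}, and let 𝓐 = {A_w : w ∈ ℝ^k}. Then every finite subset of ℝ^N shattered by 𝓐 has cardinality at most 2k·lg(4eds). -/

import Mathlib

open MvPolynomial

/-!
If `S` is shattered, then the polynomials `τ j (·, x)` with `x ∈ S` realize at least `2 ^ |S|` sign
vectors on `ℝ^k`, so it suffices to bound the number of sign vectors of `n = s * |S|` polynomials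
of degree at most `d` in `k` variables.

Replacing every `p` by `p - δ` and `p + δ` reduces this to counting the cells, given by a strict
sign for each of `2n` polynomials `q i`. The function `exp (-|w - a|² / 2) * ∏ i, |q i w| ^ c i` is
positive on a cell, vanishes on its boundary and decays at infinity, so it has a local maximum in
the cell. With `l i = c i / q i w` its critical points solve
`w j - ∑ i, l i * ∂q i / ∂w j = a j`, `l i * q i w = c i`, and by Sard's theorem all solutions are
nondegenerate for generic `(a, c)`. This system has degree at most `d` in `w` and `1` in `l`, so
Bézout's bound for two groups of variables leaves at most `(k + 2n).choose k * d ^ k` cells.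
Comparing this with `2 ^ |S|` and taking `k`-th roots and logarithms gives the estimate.
-/

namespace GoldbergJerrum

open Filter MeasureTheory Topology

section Estimates

lemma card_finsupp_degree_le (σ : Type*) [Fintype σ] (T : ℕ) :
    Nat.card {m : σ →₀ ℕ // m.degree ≤ T} = (T + Fintype.card σ).choose (Fintype.card σ) := by
  classical
  rw [Nat.subtype_card
      ((Finset.range (T + 1)).biUnion fun n => Finset.univ.finsuppAntidiag n) fun m => by
        simp [Finset.mem_finsuppAntidiag, Finsupp.degree_eq_sum],
    Finset.card_biUnion fun a _ b _ hab => Finset.disjoint_left.2 fun m ha hb => hab <|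
      (Finset.mem_finsuppAntidiag.1 ha).1.symm.trans (Finset.mem_finsuppAntidiag.1 hb).1,
    ← Nat.sum_range_multichoose]
  refine Finset.sum_congr rfl fun n _ => ?_
  rw [Finset.card_finsuppAntidiag_nat_eq_multichoose, Finset.card_univ]

lemma tendsto_affine_pow_div_pow (a b : ℝ) (r : ℕ) :
    Tendsto (fun T : ℕ => (a * T + b) ^ r / (T : ℝ) ^ r) atTop (𝓝 (a ^ r)) := by
  have hlin : Tendsto (fun T : ℕ => a + b / T) atTop (𝓝 a) := by
    simpa using (tendsto_const_div_atTop_nhds_zero_nat b).const_add a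
  refine (hlin.pow r).congr' ?_
  filter_upwards [eventually_gt_atTop 0] with T hT
  have : (T : ℝ) ≠ 0 := by positivity
  rw [← div_pow]
  congr 1
  field_simp

lemma tendsto_choose_affine_div_pow (A c r : ℕ) :
    Tendsto (fun T : ℕ => ((A * T + c + r).choose r : ℝ) / (T : ℝ) ^ r) atTop
      (𝓝 ((A : ℝ) ^ r / r.factorial)) := by
  refine tendsto_of_tendsto_of_tendsto_of_le_of_le
    ((tendsto_affine_pow_div_pow A (c + 1) r).div_const _)
    ((tendsto_affine_pow_div_pow A (c + r) r).div_const _) (fun T => ?_) (fun T => ?_)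
  · have h := Nat.pow_le_choose (α := ℝ) r (A * T + c + r)
    rw [show A * T + c + r + 1 - r = A * T + c + 1 by omega] at h
    push_cast at h
    rw [div_right_comm, ← add_assoc]
    dsimp only
    gcongr
  · have h := Nat.choose_le_pow_div (α := ℝ) r (A * T + c + r)
    push_cast at h
    rw [div_right_comm, ← add_assoc]
    dsimp only
    gcongr

lemma le_choose_mul_of_forall_mul_choose_le {N A B c k n : ℕ}
    (h : ∀ T : ℕ, N * (T + (k + n)).choose (k + n) ≤
      (A * T + c + k).choose k * (B * T + c + n).choose n) :
    N ≤ (k + n).choose k * A ^ k * B ^ n := by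
  have hleft := (tendsto_choose_affine_div_pow 1 0 (k + n)).const_mul (N : ℝ)
  have hright := (tendsto_choose_affine_div_pow A c k).mul (tendsto_choose_affine_div_pow B c n)
  have hlim := le_of_tendsto_of_tendsto' hleft hright fun T => by
    rw [pow_add, div_mul_div_comm, ← mul_div_assoc, one_mul, add_zero]
    exact div_le_div_of_nonneg_right (mod_cast h T) (by positivity)
  have hchoose : ((k + n).factorial : ℝ) = (k + n).choose k * k.factorial * n.factorial := by
    rw [Nat.choose_symm_add]
    exact_mod_cast (Nat.add_choose_mul_factorial_mul_factorial k n).symm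
  have hpos : (0 : ℝ) < (k + n).choose k := by
    exact_mod_cast Nat.choose_pos (Nat.le_add_right k n)
  rw [hchoose, Nat.cast_one, one_pow] at hlim
  field_simp at hlim
  exact_mod_cast hlim

lemma choose_le_exp_one_mul_div_pow (N k : ℕ) :
    (N.choose k : ℝ) ≤ (Real.exp 1 * N / k) ^ k := by
  rcases k.eq_zero_or_pos with rfl | hk
  · simp
  calc (N.choose k : ℝ) ≤ (N : ℝ) ^ k / k.factorial := Nat.choose_le_pow_div k N
    _ = (N / k : ℝ) ^ k * ((k : ℝ) ^ k / k.factorial) := by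
        rw [← mul_div_assoc, ← mul_pow, div_mul_cancel₀ _ (by positivity)]
    _ ≤ (N / k : ℝ) ^ k * Real.exp k := by
        gcongr
        exact Real.pow_div_factorial_le_exp _ (by positivity) _
    _ = (Real.exp 1 * N / k) ^ k := by
        rw [← Real.exp_one_pow, ← mul_pow]; ring

lemma logb_two_le_half {u : ℝ} (hu : 4 ≤ u) : Real.logb 2 u ≤ u / 2 := by
  have hlog2 := Real.log_two_gt_d9
  have hlog : Real.log u ≤ 2 * Real.log 2 + (u / 4 - 1) := by
    have := Real.log_le_sub_one_of_pos (x := u / 4) (by linarith)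
    rw [Real.log_div (by linarith) (by norm_num), show (4 : ℝ) = 2 ^ 2 by norm_num,
      Real.log_pow] at this
    push_cast at this
    linarith
  rw [Real.logb, div_le_iff₀ (by linarith)]
  nlinarith

lemma le_two_mul_logb_two_of_two_rpow_le_mul {L u : ℝ} (hL : 4 ≤ L) (h : (2 : ℝ) ^ u ≤ L * u) :
    u ≤ 2 * Real.logb 2 L := by
  have hlogL : 2 ≤ Real.logb 2 L := by
    rw [Real.le_logb_iff_rpow_le one_lt_two (by linarith)]
    norm_num
    exact hL
  rcases le_or_gt u 4 with hu | hu
  · linarith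
  have hlog : u ≤ Real.logb 2 L + Real.logb 2 u := by
    rw [← Real.logb_mul (by linarith) (by linarith),
      Real.le_logb_iff_rpow_le one_lt_two (by nlinarith)]
    exact h
  linarith [logb_two_le_half hu.le]

lemma le_of_two_pow_le_choose_mul_pow {m k s d : ℕ} (hk : 0 < k) (hs : 0 < s) (hd : 0 < d)
    (h : 2 ^ m ≤ (k + 2 * (s * m)).choose k * d ^ k) :
    (m : ℝ) ≤ 2 * k * Real.logb 2 (4 * Real.exp 1 * d * s) := by
  have hk' : (0 : ℝ) < k := by exact_mod_cast hk
  have hs1 : (1 : ℝ) ≤ s := by exact_mod_cast hs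
  have hd1 : (1 : ℝ) ≤ d := by exact_mod_cast hd
  set L : ℝ := 4 * Real.exp 1 * d * s with hL
  have hL4 : 4 ≤ L := by
    have : 1 ≤ Real.exp 1 := Real.one_le_exp zero_le_one
    calc (4 : ℝ) = 4 * 1 * 1 * 1 := by norm_num
      _ ≤ L := by rw [hL]; gcongr
  suffices hu : (m / k : ℝ) ≤ 2 * Real.logb 2 L by
    rwa [div_le_iff₀ hk', mul_right_comm] at hu
  rcases le_or_gt k (s * m) with hkm | hkm
  · refine le_two_mul_logb_two_of_two_rpow_le_mul hL4 <|
      le_of_pow_le_pow_left₀ hk.ne' (by positivity) ?_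
    calc ((2 : ℝ) ^ (m / k : ℝ)) ^ k = 2 ^ m := by
          rw [← Real.rpow_natCast, ← Real.rpow_mul zero_le_two, div_mul_cancel₀ _ hk'.ne',
            Real.rpow_natCast]
      _ ≤ (k + 2 * (s * m)).choose k * d ^ k := by exact_mod_cast h
      _ ≤ (4 * (s * m)).choose k * d ^ k := by
          gcongr
          omega
      _ ≤ (Real.exp 1 * (4 * (s * m) : ℕ) / k) ^ k * d ^ k := by
          gcongr
          exact choose_le_exp_one_mul_div_pow _ _
      _ = (L * (m / k)) ^ k := by
          rw [← mul_pow, hL]; push_cast; ring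
  · have hmk : m ≤ k := (Nat.le_mul_of_pos_left m hs).trans hkm.le
    have hlogL : 1 ≤ Real.logb 2 L := by
      rw [Real.le_logb_iff_rpow_le one_lt_two (by linarith), Real.rpow_one]
      linarith
    have : (m / k : ℝ) ≤ 1 := div_le_one_of_le₀ (by exact_mod_cast hmk) hk'.le
    linarith

end Estimates

section Bidegree

variable {R κ ι : Type*} [CommRing R] [Fintype κ] [Fintype ι]

/-- Polynomials in two groups of variables `κ` and `ι`, of degree at most `A` in the first group
and at most `B` in the second. -/
noncomputable def bidegreeLE (R κ ι : Type*) [CommRing R] [Fintype κ] [Fintype ι] (A B : ℕ) :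
    Submodule R (MvPolynomial (κ ⊕ ι) R) :=
  restrictSupport R {m | ∑ j, m (Sum.inl j) ≤ A ∧ ∑ i, m (Sum.inr i) ≤ B}

lemma mem_bidegreeLE {A B : ℕ} {p : MvPolynomial (κ ⊕ ι) R} :
    p ∈ bidegreeLE R κ ι A B ↔
      ∀ m ∈ p.support, ∑ j, m (Sum.inl j) ≤ A ∧ ∑ i, m (Sum.inr i) ≤ B :=
  Iff.rfl

lemma bidegreeLE_mono {A A' B B' : ℕ} (hA : A ≤ A') (hB : B ≤ B') :
    bidegreeLE R κ ι A B ≤ bidegreeLE R κ ι A' B' :=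
  restrictSupport_mono R fun _ hm => ⟨hm.1.trans hA, hm.2.trans hB⟩

lemma mul_mem_bidegreeLE {A A' B B' : ℕ} {p q : MvPolynomial (κ ⊕ ι) R}
    (hp : p ∈ bidegreeLE R κ ι A B) (hq : q ∈ bidegreeLE R κ ι A' B') :
    p * q ∈ bidegreeLE R κ ι (A + A') (B + B') := by
  classical
  refine mem_bidegreeLE.2 fun m hm => ?_
  obtain ⟨a, ha, b, hb, rfl⟩ := Finset.mem_add.1 (support_mul p q hm)
  simp only [Finsupp.add_apply, Finset.sum_add_distrib]
  exact ⟨add_le_add (hp ha).1 (hq hb).1, add_le_add (hp ha).2 (hq hb).2⟩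

lemma C_mem_bidegreeLE (A B : ℕ) (a : R) : C a ∈ bidegreeLE R κ ι A B :=
  (monomial_mem_restrictSupport R).2 (Or.inl (by simp))

lemma X_inr_mem_bidegreeLE (A : ℕ) {B : ℕ} (hB : 1 ≤ B) (i : ι) :
    X (Sum.inr i) ∈ bidegreeLE R κ ι A B := by
  classical
  exact (monomial_mem_restrictSupport R).2 (Or.inl (by simp [Finsupp.single_apply, hB]))

lemma prod_pow_mem_bidegreeLE {β : Type*} [Fintype β] {A B : ℕ}
    {P : β → MvPolynomial (κ ⊕ ι) R} (hP : ∀ j, P j ∈ bidegreeLE R κ ι A B) (α : β →₀ ℕ) :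
    ∏ j, P j ^ α j ∈ bidegreeLE R κ ι (A * α.degree) (B * α.degree) := by
  classical
  have hpow (j : β) (n : ℕ) : P j ^ n ∈ bidegreeLE R κ ι (A * n) (B * n) := by
    induction n with
    | zero => simpa using C_mem_bidegreeLE (κ := κ) (ι := ι) 0 0 (1 : R)
    | succ n ih => simpa only [pow_succ, Nat.mul_succ] using mul_mem_bidegreeLE ih (hP j)
  rw [Finsupp.degree_eq_sum]
  induction Finset.univ (α := β) using Finset.induction_on with
  | empty => simpa using C_mem_bidegreeLE (κ := κ) (ι := ι) 0 0 (1 : R)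
  | insert j s hj ih =>
    simpa only [Finset.prod_insert hj, Finset.sum_insert hj, Nat.mul_add] using
      mul_mem_bidegreeLE (hpow j _) ih

lemma mem_bidegreeLE_totalDegree (p : MvPolynomial (κ ⊕ ι) R) :
    p ∈ bidegreeLE R κ ι p.totalDegree p.totalDegree := by
  refine mem_bidegreeLE.2 fun m hm => ?_
  have hdeg := le_totalDegree hm
  rw [Finsupp.sum_fintype _ _ fun _ => rfl, Fintype.sum_sum_type] at hdeg
  exact ⟨by omega, by omega⟩

lemma rename_inl_mem_bidegreeLE {A : ℕ} (B : ℕ) {q : MvPolynomial κ R} (hq : q.totalDegree ≤ A) :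
    rename Sum.inl q ∈ bidegreeLE R κ ι A B := by
  classical
  refine mem_bidegreeLE.2 fun m hm => ?_
  rw [support_rename_of_injective Sum.inl_injective, Finset.mem_image] at hm
  obtain ⟨a, ha, rfl⟩ := hm
  have hdeg := (le_totalDegree ha).trans hq
  rw [Finsupp.sum_fintype _ _ fun _ => rfl] at hdeg
  simpa [Finsupp.mapDomain_apply Sum.inl_injective, Finsupp.mapDomain_of_notMem_range] using hdeg

lemma finrank_bidegreeLE [Nontrivial R] (A B : ℕ) :
    Module.finrank R (bidegreeLE R κ ι A B) =
      (A + Fintype.card κ).choose (Fintype.card κ) *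
        (B + Fintype.card ι).choose (Fintype.card ι) := by
  let e : {m : κ ⊕ ι →₀ ℕ | ∑ j, m (Sum.inl j) ≤ A ∧ ∑ i, m (Sum.inr i) ≤ B} ≃
      {m : κ →₀ ℕ // m.degree ≤ A} × {m : ι →₀ ℕ // m.degree ≤ B} :=
    (Finsupp.sumFinsuppEquivProdFinsupp.subtypeEquiv fun m => by
      simp [Finsupp.degree_eq_sum]).trans Equiv.subtypeProdEquivProd
  rw [bidegreeLE, Module.finrank_eq_nat_card_basis (basisRestrictSupport R _), Nat.card_congr e,
    Nat.card_prod, card_finsupp_degree_le, card_finsupp_degree_le]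

lemma card_le_of_linearIndependent_of_mem_bidegreeLE [Nontrivial R] {α : Type*} {A B : ℕ}
    {f : α → MvPolynomial (κ ⊕ ι) R} (hf : LinearIndependent R f)
    (hmem : ∀ a, f a ∈ bidegreeLE R κ ι A B) :
    Nat.card α ≤ (A + Fintype.card κ).choose (Fintype.card κ) *
      (B + Fintype.card ι).choose (Fintype.card ι) := by
  have hpos : 0 < Module.finrank R (bidegreeLE R κ ι A B) := by
    rw [finrank_bidegreeLE]
    exact Nat.mul_pos (Nat.choose_pos (Nat.le_add_left ..)) (Nat.choose_pos (Nat.le_add_left ..))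
  have : Module.Free R (bidegreeLE R κ ι A B) := .of_basis (basisRestrictSupport R _)
  have := Module.finite_of_finrank_pos hpos
  let g : α → bidegreeLE R κ ι A B := fun a => ⟨f a, hmem a⟩
  have hg : LinearIndependent R g := hf.of_comp (bidegreeLE R κ ι A B).subtype
  have := hg.finite
  have := Fintype.ofFinite α
  rw [← finrank_bidegreeLE (R := R), Nat.card_eq_fintype_card]
  exact hg.fintype_card_le_finrank

end Bidegree

section PolynomialMaps

variable {σ β : Type*}

lemma hasFDerivAt_eval [Fintype σ] (q : MvPolynomial σ ℝ) (w : σ → ℝ) :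
    HasFDerivAt (fun w => eval w q)
      (∑ j, eval w (pderiv j q) • (ContinuousLinearMap.proj j : (σ → ℝ) →L[ℝ] ℝ)) w := by
  classical
  induction q using MvPolynomial.induction_on with
  | C a => simpa using hasFDerivAt_const a w
  | add p q hp hq => simpa only [map_add, add_smul, Finset.sum_add_distrib] using hp.fun_add hq
  | mul_X p i hp =>
    simp only [map_mul, eval_X]
    refine (hp.fun_mul (hasFDerivAt_apply i w)).congr_fderiv ?_
    ext v
    simp [pderiv_X, Pi.single_apply, add_mul, Finset.sum_add_distrib, apply_ite, ite_mul,
      Finset.mul_sum, mul_assoc]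

lemma differentiable_eval [Finite σ] (q : MvPolynomial σ ℝ) :
    Differentiable ℝ fun w => eval w q :=
  have := Fintype.ofFinite σ
  fun w => (hasFDerivAt_eval q w).differentiableAt

/-- The map `x ↦ (P j x)_j` defined by a family of polynomials. -/
noncomputable def polyMap (P : β → MvPolynomial σ ℝ) (x : σ → ℝ) (j : β) : ℝ :=
  eval x (P j)

lemma differentiable_polyMap [Finite σ] [Finite β] (P : β → MvPolynomial σ ℝ) :
    Differentiable ℝ (polyMap P) :=
  have := Fintype.ofFinite σ
  have := Fintype.ofFinite β
  differentiable_pi.2 fun j => differentiable_eval (P j)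

/-- A zero of a system of polynomials at which the derivative of the system is surjective. -/
def IsNondegenerateZero (P : β → MvPolynomial σ ℝ) (z : σ → ℝ) : Prop :=
  polyMap P z = 0 ∧ Function.Surjective (fderiv ℝ (polyMap P) z)

end PolynomialMaps

section Bezout

variable {E β : Type*} [NormedAddCommGroup E] [NormedSpace ℝ E] [Fintype β]

/-- Along the line `z + t v` the term with exponent `ν a` is of order `t ^ |ν a|`, so that after
division by `t ^ r` only the terms of the lowest order survive in the limit `t → 0`. -/
lemma sum_zero_pow_mul_prod_pow_eq_zero {α : Type*} {F : E → β → ℝ} {z : E}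
    {L : E →L[ℝ] β → ℝ} (hz : F z = 0) (hF : HasFDerivAt F L z) {s : Finset α} {e : α → E → ℝ}
    (he : ∀ a ∈ s, ContinuousAt (e a) z) {ν : α → β →₀ ℕ} {r : ℕ}
    (hr : ∀ a ∈ s, r ≤ (ν a).degree) (hsum : ∀ x, ∑ a ∈ s, e a x * ∏ j, F x j ^ ν a j = 0)
    (v : E) : ∑ a ∈ s, e a z * (0 ^ ((ν a).degree - r) * ∏ j, L v j ^ ν a j) = 0 := by
  let u : ℝ → β → ℝ := fun t => t⁻¹ • (F (z + t • v) - F z)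
  have hu : Tendsto u (𝓝[≠] 0) (𝓝 (L v)) := (hF.hasLineDerivAt v).tendsto_slope_zero
  have hline : Tendsto (fun t : ℝ => z + t • v) (𝓝[≠] 0) (𝓝 z) :=
    tendsto_nhdsWithin_of_tendsto_nhds <| Continuous.tendsto' (by fun_prop) _ _ (by simp)
  have hpow (n : ℕ) : Tendsto (fun t : ℝ => t ^ n) (𝓝[≠] 0) (𝓝 (0 ^ n)) :=
    tendsto_nhdsWithin_of_tendsto_nhds ((continuous_pow n).tendsto 0)
  have hlim : Tendsto
      (fun t => ∑ a ∈ s, e a (z + t • v) * (t ^ ((ν a).degree - r) * ∏ j, u t j ^ ν a j))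
      (𝓝[≠] 0) (𝓝 (∑ a ∈ s, e a z * (0 ^ ((ν a).degree - r) * ∏ j, L v j ^ ν a j))) :=
    tendsto_finsetSum _ fun a ha => ((he a ha).tendsto.comp hline).mul <|
      (hpow _).mul <| tendsto_finsetProd _ fun j _ => ((tendsto_pi_nhds.1 hu) j).pow _
  have hscaled : ∀ᶠ t in 𝓝[≠] (0 : ℝ),
      ∑ a ∈ s, e a (z + t • v) * (t ^ ((ν a).degree - r) * ∏ j, u t j ^ ν a j) = 0 := by
    filter_upwards [self_mem_nhdsWithin] with t (ht : t ≠ 0)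
    have hFu (j : β) : F (z + t • v) j = t * u t j := by simp [u, hz, ht]
    refine (mul_eq_zero_iff_left (pow_ne_zero r ht)).1 ?_
    rw [← hsum (z + t • v), Finset.mul_sum]
    refine Finset.sum_congr rfl fun a ha => ?_
    simp only [hFu, mul_pow, Finset.prod_mul_distrib, Finset.prod_pow_eq_pow_sum,
      ← Finsupp.degree_eq_sum]
    nth_rewrite 2 [← Nat.add_sub_of_le (hr a ha)]
    ring
  exact tendsto_nhds_unique hlim
    (tendsto_const_nhds.congr' (hscaled.mono fun _ h => h.symm))

lemma sum_monomial_eq_zero_of_forall_sum_mul_prod_pow_eq_zero {α : Type*} {F : E → β → ℝ} {z : E}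
    {L : E →L[ℝ] β → ℝ} (hz : F z = 0) (hF : HasFDerivAt F L z) (hL : Function.Surjective L)
    {s : Finset α} {e : α → E → ℝ} (he : ∀ a ∈ s, ContinuousAt (e a) z) {ν : α → β →₀ ℕ} {r : ℕ}
    (hr : ∀ a ∈ s, r ≤ (ν a).degree) (hsum : ∀ x, ∑ a ∈ s, e a x * ∏ j, F x j ^ ν a j = 0) :
    ∑ a ∈ s with (ν a).degree = r, monomial (ν a) (e a z) = 0 := by
  refine MvPolynomial.funext fun y => ?_
  obtain ⟨v, rfl⟩ := hL y
  rw [map_sum, map_zero, Finset.sum_filter]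
  refine Eq.trans ?_ (sum_zero_pow_mul_prod_pow_eq_zero hz hF he hr hsum v)
  refine Finset.sum_congr rfl fun a ha => ?_
  rw [eval_monomial, Finsupp.prod_fintype _ _ fun _ => pow_zero _]
  split_ifs with h
  · simp [h]
  · have := hr a ha
    rw [zero_pow (by omega), zero_mul, mul_zero]

lemma linearIndependent_mul_prod_pow {ζ : Type*} {F : E → β → ℝ} {z : ζ → E} {e : ζ → E → ℝ}
    (hzero : ∀ i, F (z i) = 0)
    (hderiv : ∀ i, ∃ L : E →L[ℝ] β → ℝ, HasFDerivAt F L (z i) ∧ Function.Surjective L)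
    (he : ∀ i, Continuous (e i)) (hself : ∀ i, e i (z i) ≠ 0)
    (hother : ∀ i i', i' ≠ i → e i' (z i) = 0) :
    LinearIndependent ℝ
      fun (p : ζ × (β →₀ ℕ)) (x : E) => e p.1 x * ∏ j, F x j ^ p.2 j := by
  classical
  rw [linearIndependent_iff']
  intro s g hs
  by_contra! hne
  obtain ⟨⟨i, ν⟩, hp, hmin⟩ := Finset.exists_min_image {p ∈ s | g p ≠ 0} (fun p => p.2.degree)
    (by simpa [Finset.Nonempty] using hne)
  obtain ⟨L, hFL, hL⟩ := hderiv i
  have hsum (x : E) : ∑ p ∈ s with g p ≠ 0, (g p * e p.1 x) * ∏ j, F x j ^ p.2 j = 0 := by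
    rw [Finset.sum_filter_of_ne fun p _ hp => left_ne_zero_of_mul (left_ne_zero_of_mul hp)]
    simpa [mul_assoc] using congrFun hs x
  have hlowest := sum_monomial_eq_zero_of_forall_sum_mul_prod_pow_eq_zero (hzero i) hFL hL
    (fun p _ => ((he p.1).const_mul (g p)).continuousAt) hmin hsum
  have hcoeff := congrArg (coeff ν) hlowest
  rw [coeff_sum, coeff_zero, Finset.sum_eq_single (i, ν)] at hcoeff
  · exact hself i (by simpa [(Finset.mem_filter.1 hp).2] using hcoeff)
  · rintro ⟨i', ν'⟩ - hne
    rw [coeff_monomial]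
    split_ifs with h
    · rw [hother i i' fun h' => hne (Prod.ext h' h), mul_zero]
    · rfl
  · exact fun h => absurd (Finset.mem_filter (p := fun p => p.2.degree = ν.degree).2 ⟨hp, rfl⟩) h

lemma exists_eval_ne_zero_and_forall_eval_eq_zero {R σ : Type*} [CommRing R] [IsDomain R]
    (Z : Finset (σ → R)) (z : σ → R) :
    ∃ p : MvPolynomial σ R, eval z p ≠ 0 ∧ ∀ z' ∈ Z, z' ≠ z → eval z' p = 0 := by
  classical
  have hsep (z' : σ → R) :
      ∃ p : MvPolynomial σ R, eval z' p = 0 ∧ (z' ≠ z → eval z p ≠ 0) := by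
    by_cases h : z' = z
    · exact ⟨0, by simp [h]⟩
    · obtain ⟨j, hj⟩ := Function.ne_iff.1 h
      exact ⟨X j - C (z' j), by simp, fun _ => by simpa [sub_eq_zero] using Ne.symm hj⟩
  choose f hzero hne using hsep
  refine ⟨∏ z' ∈ Z.erase z, f z', ?_, fun z' hz' hz'z => ?_⟩
  · rw [map_prod, Finset.prod_ne_zero_iff]
    exact fun z' hz' => hne z' (Finset.ne_of_mem_erase hz')
  · rw [map_prod]
    exact Finset.prod_eq_zero (Finset.mem_erase.2 ⟨hz'z, hz'⟩) (hzero z')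

variable {κ ι : Type*} [Fintype κ] [Fintype ι]

/-- A bihomogeneous Bézout bound. The products of interpolation polynomials of the zeros with the
monomials in the equations are linearly independent, and counting dimensions in large bidegrees
bounds the number of zeros. -/
lemma card_le_of_isNondegenerateZero {A B : ℕ} {P : κ ⊕ ι → MvPolynomial (κ ⊕ ι) ℝ}
    (hP : ∀ j, P j ∈ bidegreeLE ℝ κ ι A B) {Z : Finset (κ ⊕ ι → ℝ)}
    (hZ : ∀ z ∈ Z, IsNondegenerateZero P z) :
    Z.card ≤ (Fintype.card κ + Fintype.card ι).choose (Fintype.card κ) *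
      A ^ Fintype.card κ * B ^ Fintype.card ι := by
  choose e hself hother using exists_eval_ne_zero_and_forall_eval_eq_zero Z
  let f : Z × (κ ⊕ ι →₀ ℕ) → MvPolynomial (κ ⊕ ι) ℝ := fun p => e p.1 * ∏ j, P j ^ p.2 j
  have hf : LinearIndependent ℝ f := by
    let toFun : MvPolynomial (κ ⊕ ι) ℝ →ₗ[ℝ] (κ ⊕ ι → ℝ) → ℝ := LinearMap.pi fun x =>
      (aeval x : MvPolynomial (κ ⊕ ι) ℝ →ₐ[ℝ] ℝ).toLinearMap
    refine LinearIndependent.of_comp toFun ?_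
    have := linearIndependent_mul_prod_pow (F := polyMap P) (z := ((↑) : Z → κ ⊕ ι → ℝ))
      (e := fun z x => eval x (e z)) (fun z => (hZ z z.2).1)
      (fun z => ⟨_, (differentiable_polyMap P z).hasFDerivAt, (hZ z z.2).2⟩)
      (fun z => (differentiable_eval _).continuous) (fun z => hself z)
      (fun z z' hne => hother z' z z.2 fun h => hne (Subtype.ext h.symm))
    convert this using 1
    funext p x
    simp [toFun, f, polyMap, aeval_eq_eval]
  let c := Z.sup fun z => (e z).totalDegree
  refine le_choose_mul_of_forall_mul_choose_le (c := c) fun T => ?_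
  let g : Z × {ν : κ ⊕ ι →₀ ℕ // ν.degree ≤ T} → MvPolynomial (κ ⊕ ι) ℝ := fun p => f (p.1, p.2)
  have hg : LinearIndependent ℝ g :=
    hf.comp _ (Function.injective_id.prodMap Subtype.val_injective)
  have hmem (p) : g p ∈ bidegreeLE ℝ κ ι (A * T + c) (B * T + c) := by
    have hc : (e p.1).totalDegree ≤ c := Finset.le_sup (f := fun z => (e z).totalDegree) p.1.2
    refine bidegreeLE_mono ?_ ?_ (mul_mem_bidegreeLE (mem_bidegreeLE_totalDegree _)
      (prod_pow_mem_bidegreeLE hP p.2)) <;>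
    · rw [add_comm]
      gcongr
      exact p.2.2
  simpa [Nat.card_prod, card_finsupp_degree_le] using
    card_le_of_linearIndependent_of_mem_bidegreeLE hg hmem

end Bezout

section Sard

lemma ae_forall_eq_imp_surjective_fderiv {E : Type*} [NormedAddCommGroup E] [NormedSpace ℝ E]
    [FiniteDimensional ℝ E] [MeasurableSpace E] [BorelSpace E] (μ : Measure E)
    [μ.IsAddHaarMeasure] {F : E → E} (hF : Differentiable ℝ F) :
    ∀ᵐ y ∂μ, ∀ x, F x = y → Function.Surjective (fderiv ℝ F x) := by
  have hnull : μ (F '' {x | (fderiv ℝ F x).det = 0}) = 0 :=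
    addHaar_image_eq_zero_of_det_fderivWithin_eq_zero μ
      (fun x _ => (hF x).hasFDerivAt.hasFDerivWithinAt) fun _ hx => hx
  filter_upwards [measure_eq_zero_iff_ae_notMem.1 hnull] with y hy x hx
  have hdet : (fderiv ℝ F x).det ≠ 0 := fun h => hy ⟨x, h, hx⟩
  exact ((Module.End.isUnit_iff _).1 <|
    (LinearMap.isUnit_iff_isUnit_det _).2 hdet.isUnit).surjective

end Sard

section Barrier

variable {κ ι : Type*} [Fintype κ]

lemma exists_eval_isBigO_exp_norm (q : MvPolynomial κ ℝ) (l : Filter (κ → ℝ)) :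
    ∃ N : ℝ, (fun w => eval w q) =O[l] fun w => Real.exp (N * ‖w‖) := by
  induction q using MvPolynomial.induction_on with
  | C a => exact ⟨0, by simpa using Asymptotics.isBigO_const_const a (one_ne_zero (α := ℝ)) l⟩
  | add p q hp hq =>
    obtain ⟨M, hM⟩ := hp
    obtain ⟨N, hN⟩ := hq
    have hmono {r s : ℝ} (h : r ≤ s) :
        (fun w : κ → ℝ => Real.exp (r * ‖w‖)) =O[l] fun w => Real.exp (s * ‖w‖) :=
      .of_norm_le fun w => by simpa using mul_le_mul_of_nonneg_right h (norm_nonneg w)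
    refine ⟨max M N, ?_⟩
    simpa only [map_add] using
      (hM.trans (hmono (le_max_left ..))).add (hN.trans (hmono (le_max_right ..)))
  | mul_X p i hp =>
    obtain ⟨N, hN⟩ := hp
    have hcoord : (fun w : κ → ℝ => w i) =O[l] fun w => Real.exp ‖w‖ :=
      .of_norm_le fun w => (norm_le_pi_norm w i).trans <| by
        linarith [Real.add_one_le_exp ‖w‖]
    refine ⟨N + 1, ?_⟩
    simpa only [map_mul, eval_X, add_mul, one_mul, Real.exp_add] using hN.mul hcoord

lemma norm_sq_le_sum_sq (v : κ → ℝ) : ‖v‖ ^ 2 ≤ ∑ j, v j ^ 2 := by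
  rw [← Real.le_sqrt (norm_nonneg v) (by positivity), pi_norm_le_iff_of_nonneg (Real.sqrt_nonneg _)]
  exact fun j => Real.abs_le_sqrt <|
    Finset.single_le_sum (f := fun j => v j ^ 2) (fun _ _ => sq_nonneg _) (Finset.mem_univ j)

lemma tendsto_gaussian_mul_exp_norm (a : κ → ℝ) (N : ℝ) :
    Tendsto (fun w : κ → ℝ => Real.exp (-(∑ j, (w j - a j) ^ 2) / 2) * Real.exp (N * ‖w‖))
      (cocompact _) (𝓝 0) := by
  set t := |N| + 1 with ht
  have hexp : Tendsto (fun w : κ → ℝ => Real.exp (t ^ 2 / 2 + t * ‖a‖ - ‖w‖))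
      (cocompact _) (𝓝 0) :=
    Real.tendsto_exp_atBot.comp <| tendsto_atBot_add_const_left _ _ <|
      tendsto_neg_atTop_atBot.comp tendsto_norm_cocompact_atTop
  refine squeeze_zero (fun w => by positivity) (fun w => ?_) hexp
  rw [← Real.exp_add, Real.exp_le_exp]
  have hquad : t * ‖w - a‖ ≤ (t ^ 2 + ∑ j, (w j - a j) ^ 2) / 2 := by
    have := norm_sq_le_sum_sq (w - a)
    simp only [Pi.sub_apply] at this
    nlinarith [sq_nonneg (t - ‖w - a‖)]
  have htri : t * (‖w‖ - ‖a‖) ≤ t * ‖w - a‖ :=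
    mul_le_mul_of_nonneg_left (norm_sub_norm_le w a) (by positivity)
  have hN : N * ‖w‖ ≤ |N| * ‖w‖ := mul_le_mul_of_nonneg_right (le_abs_self N) (norm_nonneg w)
  rw [ht] at hquad htri ⊢
  linarith

variable [Fintype ι]

/-- The Gaussian-damped product `exp (-‖w - a‖² / 2) · ∏ |q i w| ^ c i`. Its logarithm is a
logarithmic barrier for the cells cut out by the hypersurfaces `q i = 0`. -/
noncomputable def barrier (q : ι → MvPolynomial κ ℝ) (a : κ → ℝ) (c : ι → ℝ) (w : κ → ℝ) : ℝ :=
  Real.exp (-(∑ j, (w j - a j) ^ 2) / 2) * ∏ i, |eval w (q i)| ^ c i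

variable {q : ι → MvPolynomial κ ℝ} {a : κ → ℝ} {c : ι → ℝ}

lemma continuous_barrier (hc : ∀ i, 0 ≤ c i) : Continuous (barrier q a c) := by
  refine (by fun_prop : Continuous _).mul (continuous_finsetProd _ fun i _ => ?_)
  exact (differentiable_eval (q i)).continuous.abs.rpow_const fun _ => Or.inr (hc i)

lemma barrier_pos {w : κ → ℝ} (hw : ∀ i, eval w (q i) ≠ 0) : 0 < barrier q a c w :=
  mul_pos (Real.exp_pos _) <| Finset.prod_pos fun i _ =>
    Real.rpow_pos_of_pos (abs_pos.2 (hw i)) _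

lemma eval_ne_zero_of_barrier_pos (hc : ∀ i, c i ≠ 0) {w : κ → ℝ} (hw : 0 < barrier q a c w)
    (i : ι) : eval w (q i) ≠ 0 := by
  intro h
  refine hw.ne' (mul_eq_zero_of_right _ (Finset.prod_eq_zero (Finset.mem_univ i) ?_))
  rw [h, abs_zero, Real.zero_rpow (hc i)]

lemma tendsto_barrier_cocompact (hc : ∀ i, 0 ≤ c i) :
    Tendsto (barrier q a c) (cocompact _) (𝓝 0) := by
  choose N hN using fun i => exists_eval_isBigO_exp_norm (q i) (cocompact (κ → ℝ))
  have hprod : (fun w => ∏ i, |eval w (q i)| ^ c i) =O[cocompact (κ → ℝ)]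
      fun w => Real.exp ((∑ i, N i * c i) * ‖w‖) := by
    have := Asymptotics.IsBigO.finsetProd fun i (_ : i ∈ Finset.univ) =>
      (hN i).abs_left.rpow (hc i) (Eventually.of_forall fun w => (Real.exp_pos (N i * ‖w‖)).le)
    refine this.congr_right fun w => ?_
    rw [Finset.sum_mul, Real.exp_sum]
    refine Finset.prod_congr rfl fun i _ => ?_
    rw [← Real.exp_mul]
    ring_nf
  exact ((Asymptotics.isBigO_refl _ _).mul hprod).trans_tendsto
    (tendsto_gaussian_mul_exp_norm a _)

lemma exists_isLocalMax_barrier_of_sign_eq (hc : ∀ i, 0 < c i) {x : κ → ℝ}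
    (hx : ∀ i, eval x (q i) ≠ 0) :
    ∃ z, IsLocalMax (barrier q a c) z ∧
      ∀ i, SignType.sign (eval z (q i)) = SignType.sign (eval x (q i)) := by
  let f (i : ι) (w : κ → ℝ) : ℝ := eval x (q i) * eval w (q i)
  have hf (i : ι) : Continuous (f i) := (differentiable_eval (q i)).continuous.const_mul _
  have hxf (i : ι) : 0 < f i x := mul_self_pos.2 (hx i)
  have hcont : Continuous (barrier q a c) := continuous_barrier fun i => (hc i).le
  have hxcell : x ∈ ⋂ i, {w | 0 ≤ f i w} := Set.mem_iInter.2 fun i => (hxf i).le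
  obtain ⟨z, hz, hmax⟩ := hcont.continuousOn.exists_isMaxOn'
    (isClosed_iInter fun i => isClosed_le continuous_const (hf i)) hxcell
    (((tendsto_barrier_cocompact fun i => (hc i).le).eventually_le_const
      (barrier_pos hx)).filter_mono inf_le_left)
  have hzpos : 0 < barrier q a c z := (barrier_pos hx).trans_le (hmax hxcell)
  have hzf (i : ι) : 0 < f i z := lt_of_le_of_ne (Set.mem_iInter.1 hz i)
    (mul_ne_zero (hx i) (eval_ne_zero_of_barrier_pos (fun i => (hc i).ne') hzpos i)).symm
  refine ⟨z, hmax.isLocalMax ?_, fun i => ?_⟩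
  · filter_upwards [eventually_all.2 fun i => (hf i).continuousAt.eventually_const_lt (hzf i)]
      with w hw using Set.mem_iInter.2 fun i => (hw i).le
  · rcases mul_pos_iff.1 (hzf i) with h | h
    · rw [sign_pos h.1, sign_pos h.2]
    · rw [sign_neg h.1, sign_neg h.2]

lemma log_barrier {w : κ → ℝ} (hw : ∀ i, eval w (q i) ≠ 0) :
    Real.log (barrier q a c w) =
      ∑ i, c i * Real.log (eval w (q i)) - 2⁻¹ * ∑ j, (w j - a j) ^ 2 := by
  have hpos (i : ι) : 0 < |eval w (q i)| := abs_pos.2 (hw i)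
  rw [barrier, Real.log_mul (Real.exp_ne_zero _)
      (Finset.prod_ne_zero_iff.2 fun i _ => (Real.rpow_pos_of_pos (hpos i) _).ne'),
    Real.log_exp, Real.log_prod fun i _ => (Real.rpow_pos_of_pos (hpos i) _).ne']
  simp only [Real.log_rpow (hpos _), Real.log_abs]
  ring

lemma sub_sum_mul_eval_pderiv_eq_of_isLocalMax_barrier {z : κ → ℝ} (hz : ∀ i, eval z (q i) ≠ 0)
    (hmax : IsLocalMax (barrier q a c) z) (j : κ) :
    z j - ∑ i, c i / eval z (q i) * eval z (pderiv j (q i)) = a j := by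
  classical
  let Φ : (κ → ℝ) → ℝ := fun w =>
    ∑ i, c i * Real.log (eval w (q i)) - 2⁻¹ * ∑ j, (w j - a j) ^ 2
  have hne : ∀ᶠ w in 𝓝 z, ∀ i, eval w (q i) ≠ 0 :=
    eventually_all.2 fun i => (hasFDerivAt_eval (q i) z).continuousAt.eventually_ne (hz i)
  have hΦmax : IsLocalMax Φ z := by
    filter_upwards [hne, hmax] with w hw hle
    simp only [Φ, ← log_barrier hw, ← log_barrier hz]
    exact Real.log_le_log (barrier_pos hw) hle
  have hΦ : HasFDerivAt Φ _ z :=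
    (HasFDerivAt.fun_sum fun i _ => ((hasFDerivAt_eval (q i) z).log (hz i)).const_mul (c i)).sub <|
      (HasFDerivAt.fun_sum fun j _ =>
        ((hasFDerivAt_apply (𝕜 := ℝ) j z).sub_const (a j)).pow 2).const_mul 2⁻¹
  have hcrit : ∑ i, c i / eval z (q i) * eval z (pderiv j (q i)) - (z j - a j) = 0 := by
    simpa [Pi.single_apply, div_eq_mul_inv, mul_assoc] using
      DFunLike.congr_fun (hΦmax.hasFDerivAt_eq_zero hΦ) (Pi.single j 1)
  linarith

end Barrier

section SignPatterns

variable {κ ι : Type*} [Fintype κ] [Fintype ι]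

lemma totalDegree_pderiv_le {R σ : Type*} [CommSemiring R] (j : σ) (q : MvPolynomial σ R) :
    (pderiv j q).totalDegree ≤ q.totalDegree := by
  conv_lhs => rw [q.as_sum, map_sum]
  refine totalDegree_finsetSum_le fun m hm => ?_
  rw [pderiv_monomial]
  exact (totalDegree_monomial_le _ _).trans <|
    (Finsupp.degree_mono tsub_le_self).trans (le_totalDegree hm)

/-- The critical point equations of the barrier `barrier q a c`, in the variables `w` (of index set
`κ`) and `l i = c i / q i w` (of index set `ι`): the polynomials on the left of
`w j - ∑ i, l i * ∂q i / ∂w j = a j` and `l i * q i = c i`. -/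
noncomputable def criticalSystem (q : ι → MvPolynomial κ ℝ) : κ ⊕ ι → MvPolynomial (κ ⊕ ι) ℝ :=
  Sum.elim (fun j => X (Sum.inl j) - ∑ i, X (Sum.inr i) * rename Sum.inl (pderiv j (q i)))
    (fun i => X (Sum.inr i) * rename Sum.inl (q i))

lemma criticalSystem_mem_bidegreeLE {q : ι → MvPolynomial κ ℝ} {D : ℕ} (hD : 1 ≤ D)
    (hq : ∀ i, (q i).totalDegree ≤ D) (s : κ ⊕ ι) :
    criticalSystem q s ∈ bidegreeLE ℝ κ ι D 1 := by
  have hmul (i : ι) {r : MvPolynomial κ ℝ} (hr : r.totalDegree ≤ D) :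
      X (Sum.inr i) * rename Sum.inl r ∈ bidegreeLE ℝ κ ι D 1 := by
    simpa using mul_mem_bidegreeLE (X_inr_mem_bidegreeLE 0 le_rfl i)
      (rename_inl_mem_bidegreeLE 0 hr)
  rcases s with j | i
  · refine sub_mem ?_ (sum_mem fun i _ => hmul i ((totalDegree_pderiv_le j _).trans (hq i)))
    simpa using rename_inl_mem_bidegreeLE (R := ℝ) (ι := ι) 1 ((totalDegree_X j).trans_le hD)
  · exact hmul i (hq i)

lemma polyMap_criticalSystem_of_isLocalMax_barrier {q : ι → MvPolynomial κ ℝ} {y : κ ⊕ ι → ℝ}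
    {z : κ → ℝ} (hz : ∀ i, eval z (q i) ≠ 0)
    (hmax : IsLocalMax (barrier q (y ∘ Sum.inl) (y ∘ Sum.inr)) z) :
    polyMap (criticalSystem q) (Sum.elim z fun i => y (Sum.inr i) / eval z (q i)) = y := by
  funext s
  rcases s with j | i
  · simpa [polyMap, criticalSystem, eval_rename] using
      sub_sum_mul_eval_pderiv_eq_of_isLocalMax_barrier hz hmax j
  · simp [polyMap, criticalSystem, eval_rename, hz i]

lemma isNondegenerateZero_sub_C {σ β : Type*} [Finite σ] [Finite β] {P : β → MvPolynomial σ ℝ}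
    {y : β → ℝ} {z : σ → ℝ} (hz : polyMap P z = y)
    (hsurj : Function.Surjective (fderiv ℝ (polyMap P) z)) :
    IsNondegenerateZero (fun j => P j - C (y j)) z := by
  have hmap : polyMap (fun j => P j - C (y j)) = fun x => polyMap P x - y := by
    funext x j
    simp [polyMap]
  have := Fintype.ofFinite σ
  have := Fintype.ofFinite β
  rw [IsNondegenerateZero, hmap, fderiv_sub_const]
  exact ⟨sub_eq_zero.2 hz, hsurj⟩

lemma dense_setOf_forall_surjective_fderiv_polyMap {σ : Type*} [Finite σ]
    (P : σ → MvPolynomial σ ℝ) :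
    Dense {y | ∀ z, polyMap P z = y → Function.Surjective (fderiv ℝ (polyMap P) z)} :=
  have := Fintype.ofFinite σ
  Measure.dense_of_ae (ae_forall_eq_imp_surjective_fderiv volume (differentiable_polyMap P))

/-- A cell on which no `q i` vanishes contains a local maximum of the barrier, and for generic
parameters the local maxima are nondegenerate zeros of a system of bidegree `(D, 1)`. -/
lemma card_le_of_injOn_sign_of_forall_ne_zero {q : ι → MvPolynomial κ ℝ} {D : ℕ} (hD : 1 ≤ D)
    (hq : ∀ i, (q i).totalDegree ≤ D) {W : Finset (κ → ℝ)}
    (hW : ∀ w ∈ W, ∀ i, eval w (q i) ≠ 0)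
    (hinj : Set.InjOn (fun w i => SignType.sign (eval w (q i))) W) :
    W.card ≤ (Fintype.card κ + Fintype.card ι).choose (Fintype.card κ) * D ^ Fintype.card κ := by
  classical
  have hopen : IsOpen {y : κ ⊕ ι → ℝ | ∀ i, 0 < y (Sum.inr i)} := by
    simp only [Set.ofPred_forall]
    exact isOpen_iInter_of_finite fun i => isOpen_lt continuous_const (continuous_apply _)
  obtain ⟨y, hreg, hy⟩ := (dense_setOf_forall_surjective_fderiv_polyMap
    (criticalSystem q)).exists_mem_open hopen ⟨fun _ => 1, fun _ => one_pos⟩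
  choose! z hmax hsign using fun w (hw : w ∈ W) =>
    exists_isLocalMax_barrier_of_sign_eq (a := y ∘ Sum.inl) (c := y ∘ Sum.inr) hy (hW w hw)
  have hz (w) (hw : w ∈ W) (i : ι) : eval (z w) (q i) ≠ 0 := by
    rw [← sign_ne_zero, hsign w hw i, sign_ne_zero]
    exact hW w hw i
  let lift (w : κ → ℝ) : κ ⊕ ι → ℝ := Sum.elim (z w) fun i => y (Sum.inr i) / eval (z w) (q i)
  have hlift : Set.InjOn lift W := fun w hw w' hw' h => hinj hw hw' <| by
    have hzz : z w = z w' := congrArg (· ∘ Sum.inl) h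
    funext i
    simp only [← hsign w hw i, ← hsign w' hw' i, hzz]
  have hzero (w) (hw : w ∈ W) : polyMap (criticalSystem q) (lift w) = y :=
    polyMap_criticalSystem_of_isLocalMax_barrier (hz w hw) (hmax w hw)
  rw [← Finset.card_image_of_injOn hlift]
  simpa using card_le_of_isNondegenerateZero (A := D) (B := 1)
    (fun s => sub_mem (criticalSystem_mem_bidegreeLE hD hq s) (C_mem_bidegreeLE D 1 (y s)))
    (Finset.forall_mem_image.2 fun w hw =>
      isNondegenerateZero_sub_C (hzero w hw) (hreg _ (hzero w hw)))

lemma sign_eq_sign_of_sign_sub_add_eq {δ x y : ℝ} (hδ : 0 < δ) (hx : x ≠ 0 → δ < |x|)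
    (hy : y ≠ 0 → δ < |y|) (hsub : SignType.sign (x - δ) = SignType.sign (y - δ))
    (hadd : SignType.sign (x + δ) = SignType.sign (y + δ)) :
    SignType.sign x = SignType.sign y := by
  have hpos {t : ℝ} (ht : t ≠ 0 → δ < |t|) : 0 < t ↔ SignType.sign (t - δ) = 1 := by
    rw [sign_eq_one_iff, sub_pos]
    exact ⟨fun h => (ht h.ne').trans_eq (abs_of_pos h), hδ.trans⟩
  have hneg {t : ℝ} (ht : t ≠ 0 → δ < |t|) : t < 0 ↔ SignType.sign (t + δ) = -1 := by
    rw [sign_eq_neg_one_iff]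
    refine ⟨fun h => ?_, fun h => by linarith⟩
    have := (ht h.ne).trans_eq (abs_of_neg h)
    linarith
  have hpos_iff : 0 < x ↔ 0 < y := by rw [hpos hx, hpos hy, hsub]
  have hneg_iff : x < 0 ↔ y < 0 := by rw [hneg hx, hneg hy, hadd]
  simp only [sign_apply, hpos_iff, hneg_iff]

/-- For small `δ > 0` the sign of `p i` on `W` can be read off from the signs of `p i - δ` and
`p i + δ`, neither of which vanishes on `W`. -/
lemma card_le_of_injOn_sign {p : ι → MvPolynomial κ ℝ} {d : ℕ} (hd : 1 ≤ d)
    (hp : ∀ i, (p i).totalDegree ≤ d) {W : Finset (κ → ℝ)}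
    (hinj : Set.InjOn (fun w i => SignType.sign (eval w (p i))) W) :
    W.card ≤ (Fintype.card κ + 2 * Fintype.card ι).choose (Fintype.card κ) *
      d ^ Fintype.card κ := by
  have hsmall : ∀ᶠ δ in 𝓝[>] (0 : ℝ), ∀ w ∈ W, ∀ i, eval w (p i) ≠ 0 → δ < |eval w (p i)| := by
    simp only [eventually_all_finset, eventually_all]
    exact fun w _ i h => eventually_nhdsWithin_of_eventually_nhds (eventually_lt_nhds (abs_pos.2 h))
  obtain ⟨δ, hsep, hδ : 0 < δ⟩ := (hsmall.and self_mem_nhdsWithin).exists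
  let q : ι ⊕ ι → MvPolynomial κ ℝ := Sum.elim (fun i => p i - C δ) fun i => p i + C δ
  have hq (s : ι ⊕ ι) : (q s).totalDegree ≤ d := by
    rcases s with i | i
    · exact (totalDegree_sub _ _).trans (max_le (hp i) (by simp))
    · exact (totalDegree_add _ _).trans (max_le (hp i) (by simp))
  have hne (w) (hw : w ∈ W) (s : ι ⊕ ι) : eval w (q s) ≠ 0 := by
    rcases s with i | i <;> intro h
    · have h : eval w (p i) = δ := by simpa [q, sub_eq_zero] using h
      exact (hsep w hw i (h ▸ hδ.ne')).ne' (by rw [h, abs_of_pos hδ])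
    · have h : eval w (p i) = -δ := by simpa [q, add_eq_zero_iff_eq_neg] using h
      exact (hsep w hw i (h ▸ (neg_neg_of_pos hδ).ne)).ne' (by rw [h, abs_neg, abs_of_pos hδ])
  have hqinj : Set.InjOn (fun w s => SignType.sign (eval w (q s))) W := by
    refine fun w hw w' hw' h => hinj hw hw' (funext fun i => ?_)
    refine sign_eq_sign_of_sign_sub_add_eq hδ (hsep w hw i) (hsep w' hw' i) ?_ ?_
    · simpa [q] using congrFun h (Sum.inl i)
    · simpa [q] using congrFun h (Sum.inr i)
  simpa [two_mul] using card_le_of_injOn_sign_of_forall_ne_zero hd hq hne hqinj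

end SignPatterns

section Specialization

variable {R κ ν : Type*} [CommSemiring R]

/-- The polynomial in the parameters `w` obtained from a polynomial in `(w, x)` by fixing `x`. -/
noncomputable def specialize (x : ν → R) (p : MvPolynomial (κ ⊕ ν) R) : MvPolynomial κ R :=
  aeval (Sum.elim X fun i => C (x i)) p

lemma eval_specialize (w : κ → R) (x : ν → R) (p : MvPolynomial (κ ⊕ ν) R) :
    eval w (specialize x p) = eval (Sum.elim w x) p := by
  rw [specialize, map_aeval, eval, algebraMap_eq]
  congr 2
  · ext r
    simp
  · ext (j | i) <;> simp

lemma totalDegree_specialize_le [Fintype κ] [Finite ν] {p : MvPolynomial (κ ⊕ ν) R} {d : ℕ}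
    (hp : ∀ m ∈ p.support, ∑ j, m (Sum.inl j) ≤ d) (x : ν → R) :
    (specialize x p).totalDegree ≤ d := by
  have := Fintype.ofFinite ν
  rw [specialize, p.as_sum, map_sum]
  refine totalDegree_finsetSum_le fun m hm => le_trans ?_ (hp m hm)
  have hinl : (∏ j, (X j : MvPolynomial κ R) ^ m (Sum.inl j)).totalDegree ≤
      ∑ j, m (Sum.inl j) :=
    (totalDegree_finsetProd _ _).trans (Finset.sum_le_sum fun j _ => by
      rw [X_pow_eq_monomial]
      exact (totalDegree_monomial_le _ _).trans (by simp))
  rw [aeval_monomial, Finsupp.prod_fintype _ _ (by simp), Fintype.prod_sum_type]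
  simp only [algebraMap_eq, Sum.elim_inl, Sum.elim_inr, ← map_pow, ← map_prod]
  calc (C (coeff m p) * ((∏ j, X j ^ m (Sum.inl j)) * C (∏ i, x i ^ m (Sum.inr i)))).totalDegree
    _ ≤ 0 + ((∏ j, X j ^ m (Sum.inl j) : MvPolynomial κ R).totalDegree + 0) := by
        refine (totalDegree_mul _ _).trans (add_le_add (totalDegree_C _).le ?_)
        exact (totalDegree_mul _ _).trans (add_le_add le_rfl (totalDegree_C _).le)
    _ ≤ ∑ j, m (Sum.inl j) := by simpa using hinl

end Specialization

section Shattering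

/-- The family `A w` shatters `S`: every subset of `S` is cut out by some member. Here the family
is indexed by a parameter `w`, as opposed to the set family of `Finset.Shatters`. -/
def Shatters {W X : Type*} (A : W → Set X) (S : Finset X) : Prop :=
  ∀ T ⊆ S, ∃ w, (↑S : Set X) ∩ A w = ↑T

lemma Shatters.eq_empty_of_forall_eq {W X : Type*} {A : W → Set X} {S : Finset X}
    (hS : Shatters A S) (hA : ∀ w w', A w = A w') : S = ∅ := by
  obtain ⟨w, hw⟩ := hS S subset_rfl
  obtain ⟨w', hw'⟩ := hS ∅ S.empty_subset
  rw [hA w w'] at hw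
  exact_mod_cast hw.symm.trans hw'

variable {κ ι X : Type*} [Fintype κ] [Fintype ι]

lemma Shatters.two_pow_card_le {A : (κ → ℝ) → Set X} {S : Finset X} (hS : Shatters A S)
    {p : ι → X → MvPolynomial κ ℝ} {d : ℕ} (hd : 1 ≤ d) (hp : ∀ i x, (p i x).totalDegree ≤ d)
    (hA : ∀ w w' x, (∀ i, SignType.sign (eval w (p i x)) = SignType.sign (eval w' (p i x))) →
      (x ∈ A w ↔ x ∈ A w')) :
    2 ^ S.card ≤ (Fintype.card κ + 2 * (Fintype.card ι * S.card)).choose (Fintype.card κ) *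
      d ^ Fintype.card κ := by
  classical
  choose! w hw using hS
  let q : ι × S → MvPolynomial κ ℝ := fun i => p i.1 i.2
  have hinj : Set.InjOn ((fun v i => SignType.sign (eval v (q i))) ∘ w) S.powerset := by
    intro T hT T' hT' h
    have hmem (x : X) (hx : x ∈ S) : x ∈ A (w T) ↔ x ∈ A (w T') :=
      hA _ _ x fun i => congrFun h (i, ⟨x, hx⟩)
    rw [← Finset.coe_inj, ← hw T (Finset.mem_powerset.1 hT), ← hw T' (Finset.mem_powerset.1 hT')]
    exact Set.ext fun x => and_congr_right (hmem x)
  rw [← Finset.card_powerset, ← Finset.card_image_of_injOn (Set.InjOn.of_comp hinj)]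
  simpa [q] using card_le_of_injOn_sign hd (p := q) (fun i => hp i.1 i.2)
    (by simpa only [Finset.coe_image] using hinj.image_of_comp)

end Shattering

end GoldbergJerrum

open GoldbergJerrum in
theorem goldberg_jerrum_vc_bound_general {κ ι X : Type*} [Fintype κ] [Fintype ι]
    (p : ι → X → MvPolynomial κ ℝ) (d : ℕ) (hp : ∀ i x, (p i x).totalDegree ≤ d)
    (A : (κ → ℝ) → Set X)
    (hA : ∀ w w' x, (∀ i, SignType.sign (eval w (p i x)) = SignType.sign (eval w' (p i x))) →
      (x ∈ A w ↔ x ∈ A w'))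
    (S : Finset X) (hS : Shatters A S) :
    (S.card : ℝ) ≤
      2 * Fintype.card κ * Real.logb 2 (4 * Real.exp 1 * d * Fintype.card ι) := by
  by_cases hdeg : IsEmpty κ ∨ IsEmpty ι ∨ d = 0
  · have hconst (w w' : κ → ℝ) : A w = A w' := Set.ext fun x => hA w w' x fun i => by
      rcases hdeg with hκ | hι | rfl
      · rw [Subsingleton.elim w w']
      · exact hι.elim i
      · rw [totalDegree_eq_zero_iff_eq_C.1 (Nat.le_zero.1 (hp i x)), eval_C, eval_C]
    rw [hS.eq_empty_of_forall_eq hconst]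
    -- The right-hand side is `0` as well; for `IsEmpty ι` and `d = 0` because `Real.logb 2 0 = 0`.
    rcases hdeg with hκ | hι | rfl <;> simp
  · simp only [not_or, not_isEmpty_iff] at hdeg
    obtain ⟨hκ, hι, hd⟩ := hdeg
    have hd := Nat.pos_of_ne_zero hd
    exact le_of_two_pow_le_choose_mul_pow Fintype.card_pos Fintype.card_pos hd
      (hS.two_pow_card_le hd hp hA)

/-- Goldberg–Jerrum bound: `φ(w,x)` is a fixed Boolean combination of `s`
atomic predicates `τ_j(w,x) = 0` or `τ_j(w,x) > 0`, where each `τ_j` has degree at most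
`d` in the components of `w`.  Then every finite subset of `ℝ^N` shattered by
`𝓐 = {A_w}` has cardinality at most `2k·lg(4eds)`. -/
theorem goldberg_jerrum_vc_bound
    (s k N d : ℕ)
    (τ : Fin s → MvPolynomial (Fin k ⊕ Fin N) ℝ)
    (hdeg : ∀ j, ∀ m ∈ (τ j).support, ∑ i : Fin k, m (Sum.inl i) ≤ d)
    (sign : Fin s → Bool)
    (g : (Fin s → Prop) → Prop)
    (φ : (Fin k → ℝ) → (Fin N → ℝ) → Prop)
    (hφ : ∀ w x, φ w x ↔ g (fun j =>
      if sign j then MvPolynomial.eval (Sum.elim w x) (τ j) = 0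
      else 0 < MvPolynomial.eval (Sum.elim w x) (τ j))) :
    ∀ S : Finset (Fin N → ℝ),
      (∀ T ⊆ S, ∃ w : Fin k → ℝ, (↑S : Set (Fin N → ℝ)) ∩ {x | φ w x} = ↑T) →
      (S.card : ℝ) ≤ 2 * k * Real.logb 2 (4 * Real.exp 1 * d * s) := by
  intro S hS
  have hbound := goldberg_jerrum_vc_bound_general (fun j x => GoldbergJerrum.specialize x (τ j)) d
    (fun j => GoldbergJerrum.totalDegree_specialize_le (hdeg j)) _ (fun w w' x h => ?_) S hS
  · simpa only [Fintype.card_fin] using hbound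
  simp only [GoldbergJerrum.eval_specialize] at h
  have hzero (j) : eval (Sum.elim w x) (τ j) = 0 ↔ eval (Sum.elim w' x) (τ j) = 0 := by
    rw [← sign_eq_zero_iff, h j, sign_eq_zero_iff]
  have hpos (j) : 0 < eval (Sum.elim w x) (τ j) ↔ 0 < eval (Sum.elim w' x) (τ j) := by
    rw [← sign_eq_one_iff, h j, sign_eq_one_iff]
  simp only [Set.mem_ofPred_eq, hφ, hzero, hpos]
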